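/- Let ν > 0 and ε > 0. Define f(x) = (2π)^{−1} ∫_ℝ e^{−ξ⁴} e^{i ξ x} dξ and C₁ = ∫_ℝ |f(x)| dx. Then there exist t > 0 and a C^∞ function h₀ : ℝ → ℝ, 2π-periodic, with ∫_{−π}^{π} h₀(x) dx = 0 and sup_{x ∈ ℝ} |h₀'(x)| < 1, such that sup_{x ∈ ℝ} | ∫_ℝ (νt)^{−1/4} f( (x−y)(νt)^{−1/4} ) h₀'(y) dy | > C₁ − ε. -/

import Mathlib

open Real MeasureTheory Set

noncomputable section

/-- The 1D biharmonic heat kernel profile `f = F⁻¹(e^{−ξ⁴})`, i.e.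
`f(x) = (2π)^{−1} ∫_ℝ e^{−ξ⁴} e^{iξx} dξ` (a real-valued function, taken here as the
real part of the complex integral). -/
noncomputable def fker (x : ℝ) : ℝ :=
  ((2 * Real.pi)⁻¹ •
    ∫ ξ : ℝ, Complex.exp (Complex.I * (ξ : ℂ) * (x : ℂ) - ((ξ ^ 4 : ℝ) : ℂ))).re

/-- `C₁ = ‖f‖_{L¹(ℝ)}` where `f = F⁻¹(e^{−ξ⁴})`. -/
noncomputable def Cone : ℝ := ∫ x : ℝ, |fker x|

/-!
Since `‖f‖₁ = ∫ f * sign f`, the optimal slope for the evolution at the point `0` is the sign of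
the reflected kernel. Restricted to a long window `[-T/2, T/2)`, this sign extends to a
`T`-antiperiodic function at the cost of only the tails of the kernel, and mollification makes it
smooth while preserving the bound and the antiperiodicity. Antiperiodicity has two uses: it gives
mean zero over a period, and it provides an antiderivative that is again antiperiodic. Dilating the
period `2T` to `2π` is absorbed by the self-similarity of the kernel, which fixes `t`.
-/

open Filter Topology FourierTransform
open scoped Convolution

section Antiperiodization

/-- For `T > 0`, the `T`-antiperiodic function that agrees with `s` on `[-T/2, T/2)`; it turns the
sign of a kernel into an admissible slope. The integer `round (y / T)` counts the window containing
`y`. -/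
def antiperiodize (T : ℝ) (s : ℝ → ℝ) (y : ℝ) : ℝ :=
  (-1) ^ round (y / T) * s (y - T * round (y / T))

variable {T y : ℝ} {s : ℝ → ℝ}

lemma antiperiodic_antiperiodize (hT : T ≠ 0) (s : ℝ → ℝ) :
    Function.Antiperiodic (antiperiodize T s) T := by
  intro y
  have window_succ : round ((y + T) / T) = round (y / T) + 1 := by
    rw [add_div, div_self hT, round_add_one]
  have same_position : y + T - T * (round (y / T) + 1) = y - T * round (y / T) := by ring
  simp only [antiperiodize, window_succ, Int.cast_add, Int.cast_one, same_position,
    zpow_add_one₀ (neg_ne_zero.2 one_ne_zero : (-1 : ℝ) ≠ 0)]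
  ring

lemma measurable_antiperiodize (T : ℝ) (hs : Measurable s) : Measurable (antiperiodize T s) := by
  have measurable_window : Measurable fun y : ℝ => round (y / T) := by
    simp only [round_eq]
    exact Int.measurable_floor.comp (by fun_prop)
  exact ((measurable_from_top (f := fun n : ℤ => (-1 : ℝ) ^ n)).comp measurable_window).mul
    (hs.comp (measurable_id.sub
      ((measurable_from_top.comp measurable_window).const_mul T)))

lemma abs_antiperiodize_le {C : ℝ} (T : ℝ) (hs : ∀ y, |s y| ≤ C) (y : ℝ) :
    |antiperiodize T s y| ≤ C := by
  rw [antiperiodize, abs_mul, abs_neg_one_zpow, one_mul]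
  exact hs _

lemma antiperiodize_eq_self (hy : 2 * |y| < T) : antiperiodize T s y = s y := by
  have hT : 0 < T := lt_of_le_of_lt (by positivity) hy
  obtain ⟨left_lt, lt_right⟩ := abs_lt.1 (show |y| < T / 2 by linarith)
  have window_zero : round (y / T) = 0 := by
    rw [round_eq_zero_iff, mem_Ico, le_div_iff₀ hT, div_lt_iff₀ hT]
    constructor <;> linarith
  simp [antiperiodize, window_zero]

lemma tendsto_integral_mul_antiperiodize {F : ℝ → ℝ} {C : ℝ} (hF : Integrable F)
    (hs : Measurable s) (hsC : ∀ y, |s y| ≤ C) :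
    Tendsto (fun T => ∫ y, F y * antiperiodize T s y) atTop (𝓝 (∫ y, F y * s y)) := by
  refine tendsto_integral_filter_of_dominated_convergence (fun y => |F y| * C)
    (.of_forall fun T => hF.1.mul (measurable_antiperiodize T hs).aestronglyMeasurable)
    (.of_forall fun T => .of_forall fun y => ?_) (hF.abs.mul_const C) (.of_forall fun y => ?_)
  · rw [Real.norm_eq_abs, abs_mul]
    gcongr
    exact abs_antiperiodize_le T hsC y
  · refine tendsto_const_nhds.congr' ?_
    filter_upwards [eventually_gt_atTop (2 * |y|)] with T hT
    rw [antiperiodize_eq_self hT]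

end Antiperiodization

section SignFunction

lemma measurable_coe_sign : Measurable fun x : ℝ => (SignType.sign x : ℝ) := by
  simp only [sign_apply, apply_ite (SignType.cast : SignType → ℝ)]
  exact .ite measurableSet_Ioi measurable_const
    (.ite measurableSet_Iio measurable_const measurable_const)

lemma abs_coe_sign_le_one (x : ℝ) : |(SignType.sign x : ℝ)| ≤ 1 := by
  rcases lt_trichotomy x 0 with h | h | h <;> simp [h]

lemma exists_measurable_abs_le_one_integral_mul_eq {α : Type*} [MeasurableSpace α] {μ : Measure α}
    {F : α → ℝ} (hF : AEStronglyMeasurable F μ) :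
    ∃ s : α → ℝ, Measurable s ∧ (∀ y, |s y| ≤ 1) ∧ ∫ y, F y * s y ∂μ = ∫ y, |F y| ∂μ := by
  refine ⟨fun y => SignType.sign (hF.mk F y),
    measurable_coe_sign.comp hF.stronglyMeasurable_mk.measurable,
    fun y => abs_coe_sign_le_one _, integral_congr_ae ?_⟩
  filter_upwards [hF.ae_eq_mk] with y hy
  rw [← hy, self_mul_sign]

end SignFunction

lemma exists_measurable_antiperiodic_lt_integral_mul {F : ℝ → ℝ} {c : ℝ} (hF : Integrable F)
    (hc : c < ∫ y, |F y|) :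
    ∃ (T : ℝ) (u : ℝ → ℝ), 0 < T ∧ Measurable u ∧ Function.Antiperiodic u T ∧
      (∀ y, |u y| ≤ 1) ∧ c < ∫ y, F y * u y := by
  obtain ⟨s, hs, hs_le, integral_eq⟩ := exists_measurable_abs_le_one_integral_mul_eq hF.1
  rw [← integral_eq] at hc
  obtain ⟨T, hcT, hT⟩ := (((tendsto_integral_mul_antiperiodize hF hs hs_le).eventually_const_lt
    hc).and (eventually_gt_atTop 0)).exists
  exact ⟨T, antiperiodize T s, hT, measurable_antiperiodize T hs,
    antiperiodic_antiperiodize hT.ne' s, abs_antiperiodize_le T hs_le, hcT⟩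

section Mollification

lemma antiperiodic_convolution_right {𝕜 G E E' F : Type*} [NontriviallyNormedField 𝕜]
    [AddCommGroup G] [MeasurableSpace G] {μ : Measure G}
    [NormedAddCommGroup E] [NormedSpace 𝕜 E] [NormedAddCommGroup E'] [NormedSpace 𝕜 E']
    [NormedAddCommGroup F] [NormedSpace 𝕜 F] [NormedSpace ℝ F]
    (L : E →L[𝕜] E' →L[𝕜] F) (f : G → E) {u : G → E'} {T : G} (hu : Function.Antiperiodic u T) :
    Function.Antiperiodic (f ⋆[L, μ] u) T := by
  intro y
  simp only [convolution_def, ← integral_neg]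
  congr 1 with z
  rw [add_sub_right_comm, hu, map_neg]

lemma norm_normed_convolution_le {G E : Type*} [NormedAddCommGroup G] [NormedSpace ℝ G]
    [HasContDiffBump G] [MeasurableSpace G] [BorelSpace G] [FiniteDimensional ℝ G]
    {μ : Measure G} [IsLocallyFiniteMeasure μ] [μ.IsOpenPosMeasure]
    [NormedAddCommGroup E] [NormedSpace ℝ E] (φ : ContDiffBump (0 : G)) {u : G → E} {C : ℝ}
    (hu : ∀ y, ‖u y‖ ≤ C) (y : G) :
    ‖(φ.normed μ ⋆[ContinuousLinearMap.lsmul ℝ ℝ, μ] u) y‖ ≤ C := by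
  calc ‖(φ.normed μ ⋆[ContinuousLinearMap.lsmul ℝ ℝ, μ] u) y‖
      ≤ ∫ z, φ.normed μ z * C ∂μ := by
        refine norm_integral_le_of_norm_le (φ.integrable_normed.mul_const C)
          (.of_forall fun z => ?_)
        rw [ContinuousLinearMap.lsmul_apply, norm_smul,
          Real.norm_of_nonneg (φ.nonneg_normed z)]
        gcongr
        · exact φ.nonneg_normed z
        · exact hu _
    _ = C := by rw [integral_mul_const, φ.integral_normed, one_mul]

lemma exists_contDiffBump_seq (G : Type*) [NormedAddCommGroup G] [NormedSpace ℝ G] :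
    ∃ φ : ℕ → ContDiffBump (0 : G),
      Tendsto (fun n => (φ n).rOut) atTop (𝓝 0) ∧ ∀ n, (φ n).rOut ≤ 2 * (φ n).rIn := by
  refine ⟨fun n => ⟨1 / (n + 1), 2 * (1 / (n + 1)), by positivity,
    lt_two_mul_self (by positivity)⟩, ?_, fun n => le_rfl⟩
  simpa using (tendsto_one_div_add_atTop_nhds_zero_nat (𝕜 := ℝ)).const_mul 2

lemma exists_contDiff_antiperiodic_lt_integral_mul {F : ℝ → ℝ} {c : ℝ} (hF : Integrable F)
    (hc : c < ∫ y, |F y|) :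
    ∃ (T : ℝ) (g : ℝ → ℝ), 0 < T ∧ ContDiff ℝ (⊤ : ℕ∞) g ∧ Function.Antiperiodic g T ∧
      (∀ y, |g y| ≤ 1) ∧ c < ∫ y, F y * g y := by
  obtain ⟨T, u, hT, hu, hu_anti, hu_le, hcu⟩ :=
    exists_measurable_antiperiodic_lt_integral_mul hF hc
  obtain ⟨φ, φ_shrinks, φ_ratio⟩ := exists_contDiffBump_seq ℝ
  let g (n : ℕ) : ℝ → ℝ := (φ n).normed volume ⋆[ContinuousLinearMap.lsmul ℝ ℝ, volume] u
  have u_locallyIntegrable : LocallyIntegrable u :=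
    (locallyIntegrable_const (1 : ℝ)).mono hu.aestronglyMeasurable
      (.of_forall fun y => by simpa using hu_le y)
  have g_contDiff (n) : ContDiff ℝ (⊤ : ℕ∞) (g n) :=
    (φ n).hasCompactSupport_normed.contDiff_convolution_left _ (φ n).contDiff_normed
      u_locallyIntegrable
  have g_le (n y) : |g n y| ≤ 1 := norm_normed_convolution_le (μ := volume) (φ n) (u := u) hu_le y
  have g_tendsto : ∀ᵐ y, Tendsto (fun n => g n y) atTop (𝓝 (u y)) :=
    ContDiffBump.ae_convolution_tendsto_right_of_locallyIntegrable φ_shrinks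
      (.of_forall φ_ratio) u_locallyIntegrable
  have integral_tendsto :
      Tendsto (fun n => ∫ y, F y * g n y) atTop (𝓝 (∫ y, F y * u y)) := by
    refine tendsto_integral_of_dominated_convergence (fun y => |F y|)
      (fun n => hF.1.mul (g_contDiff n).continuous.aestronglyMeasurable) hF.abs
      (fun n => .of_forall fun y => ?_) (g_tendsto.mono fun y hy => hy.const_mul _)
    rw [Real.norm_eq_abs, abs_mul]
    exact mul_le_of_le_one_right (abs_nonneg _) (g_le n y)
  obtain ⟨n, hn⟩ := (integral_tendsto.eventually_const_lt hcu).exists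
  exact ⟨T, g n, hT, g_contDiff n, antiperiodic_convolution_right _ _ hu_anti, g_le n, hn⟩

end Mollification

lemma exists_mem_Ioo_zero_one_lt_mul {c J : ℝ} (hc : c < J) :
    ∃ a ∈ Ioo (0 : ℝ) 1, c < a * J := by
  have scaling : Tendsto (· * J) (𝓝[<] 1) (𝓝 J) :=
    ((continuous_mul_const J).tendsto' 1 J (one_mul J)).mono_left nhdsWithin_le_nhds
  have near_one : ∀ᶠ a in 𝓝[<] (1 : ℝ), a ∈ Ioo 0 1 := Ioo_mem_nhdsLT zero_lt_one
  exact (near_one.and (scaling.eventually_const_lt hc)).exists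

lemma exists_dilation_antiperiodic_lt_integral {K : ℝ → ℝ} {c P : ℝ} (hK : Integrable K)
    (hc : c < ∫ y, |K y|) (hP : 0 < P) :
    ∃ (r a : ℝ) (g : ℝ → ℝ), 0 < r ∧ a < 1 ∧ ContDiff ℝ (⊤ : ℕ∞) g ∧
      Function.Antiperiodic g P ∧ (∀ y, |g y| ≤ a) ∧ c < ∫ y, r * K (-y * r) * g y := by
  rw [← integral_neg_eq_self] at hc
  obtain ⟨T, g, hT, hg, hg_anti, hg_le, hcg⟩ :=
    exists_contDiff_antiperiodic_lt_integral_mul hK.comp_neg hc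
  obtain ⟨a, ⟨ha_pos, ha_lt⟩, hca⟩ := exists_mem_Ioo_zero_one_lt_mul hcg
  set r := T / P
  have hr : 0 < r := div_pos hT hP
  refine ⟨r, a, fun y => a * g (y * r), hr, ha_lt, by fun_prop, fun y => ?_, fun y => ?_, ?_⟩
  · have period_dilated : (y + P) * r = y * r + T := by rw [add_mul, mul_div_cancel₀ T hP.ne']
    simp only [period_dilated, hg_anti _, mul_neg]
  · rw [abs_mul, abs_of_pos ha_pos]
    exact mul_le_of_le_one_right ha_pos.le (hg_le _)
  · calc c < a * ∫ y, K (-y) * g y := hca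
      _ = a * (r * ∫ y, K (-(y * r)) * g (y * r)) := by
        rw [Measure.integral_comp_mul_right (fun y => K (-y) * g y), abs_of_pos (inv_pos.2 hr),
          smul_eq_mul, mul_inv_cancel_left₀ hr.ne']
      _ = ∫ y, r * K (-y * r) * (a * g (y * r)) := by
        simp only [← integral_const_mul, neg_mul]
        congr 1 with y
        ring

section AntiperiodicPrimitive

variable {E : Type*} [NormedAddCommGroup E] [NormedSpace ℝ E] {g : ℝ → E} {T : ℝ}

/-- The antiderivative of a `T`-antiperiodic function that is itself `T`-antiperiodic. Its
derivative `-(g (y + T) - g y) / 2` is `g y` because `g (y + T) = -g y`. -/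
def antiperiodicPrimitive (g : ℝ → E) (T y : ℝ) : E :=
  -((2⁻¹ : ℝ) • ∫ x in y..y + T, g x)

lemma antiperiodic_antiperiodicPrimitive (hg : Function.Antiperiodic g T) :
    Function.Antiperiodic (antiperiodicPrimitive g T) T := by
  intro y
  simp only [antiperiodicPrimitive, ← intervalIntegral.integral_comp_add_right, hg _,
    intervalIntegral.integral_neg, smul_neg]

lemma hasDerivAt_antiperiodicPrimitive [CompleteSpace E] (hg : Function.Antiperiodic g T)
    (hgc : Continuous g) (y : ℝ) : HasDerivAt (antiperiodicPrimitive g T) (g y) y := by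
  have hasDerivAt_primitive (z : ℝ) : HasDerivAt (fun z => ∫ x in (0 : ℝ)..z, g x) (g z) z :=
    (hgc.integral_hasStrictDerivAt 0 z).hasDerivAt
  have eq_sub : antiperiodicPrimitive g T = fun z =>
      -((2⁻¹ : ℝ) • ((∫ x in (0 : ℝ)..z + T, g x) - ∫ x in (0 : ℝ)..z, g x)) := by
    funext z
    rw [antiperiodicPrimitive, intervalIntegral.integral_interval_sub_left
      (hgc.intervalIntegrable _ _) (hgc.intervalIntegrable _ _)]
  have deriv_eq : -((2⁻¹ : ℝ) • (g (y + T) - g y)) = g y := by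
    rw [hg y]
    module
  rw [eq_sub, ← deriv_eq]
  exact ((((hasDerivAt_primitive (y + T)).comp_add_const y T).sub
    (hasDerivAt_primitive y)).const_smul (2⁻¹ : ℝ)).neg

lemma contDiff_antiperiodicPrimitive [CompleteSpace E] (hg : Function.Antiperiodic g T)
    (hgs : ContDiff ℝ (⊤ : ℕ∞) g) : ContDiff ℝ (⊤ : ℕ∞) (antiperiodicPrimitive g T) := by
  have hasDerivAt := hasDerivAt_antiperiodicPrimitive hg hgs.continuous
  have deriv_eq : deriv (antiperiodicPrimitive g T) = g := funext fun y => (hasDerivAt y).deriv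
  exact contDiff_infty_iff_deriv.2
    ⟨fun y => (hasDerivAt y).differentiableAt, by rwa [deriv_eq]⟩

-- Translation by `T` preserves the integral over a full period `2 * T` but changes its sign.
lemma intervalIntegral_eq_zero_of_antiperiodic (hg : Function.Antiperiodic g T) :
    ∫ x in -T..T, g x = 0 := by
  have periodic := hg.periodic_two_mul.intervalIntegral_add_eq (-T) (-T + T)
  rw [show -T + 2 * T = T by ring, show -T + T + 2 * T = T + T by ring,
    ← intervalIntegral.integral_comp_add_right] at periodic
  simp only [hg _, intervalIntegral.integral_neg] at periodic
  have : IsAddTorsionFree E := .of_isTorsionFree ℝ E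
  exact self_eq_neg.1 periodic

end AntiperiodicPrimitive

theorem stmt19_general {K : ℝ → ℝ} (hK : Integrable K) {p : ℝ} (hp : p ≠ 0) {ν ε : ℝ}
    (hν : 0 < ν) (hε : 0 < ε) :
    ∃ (t : ℝ) (h₀ : ℝ → ℝ), 0 < t ∧
      ContDiff ℝ (⊤ : ℕ∞) h₀ ∧
      Function.Periodic h₀ (2 * π) ∧
      (∫ x in Icc (-π) π, h₀ x) = 0 ∧
      (⨆ x : ℝ, |deriv h₀ x|) < 1 ∧
      ∃ x : ℝ, (∫ y, |K y|) - ε <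
        |∫ y : ℝ, (ν * t) ^ p * K ((x - y) * (ν * t) ^ p) * deriv h₀ y| := by
  obtain ⟨r, a, g, hr, ha, hg, hg_anti, hg_le, lt_integral⟩ :=
    exists_dilation_antiperiodic_lt_integral hK (sub_lt_self _ hε) pi_pos
  have primitive_anti := antiperiodic_antiperiodicPrimitive hg_anti
  have deriv_primitive (y : ℝ) : deriv (antiperiodicPrimitive g π) y = g y :=
    (hasDerivAt_antiperiodicPrimitive hg_anti hg.continuous y).deriv
  have dilation_eq : (ν * (r ^ p⁻¹ / ν)) ^ p = r := by
    rw [mul_div_cancel₀ _ hν.ne', rpow_inv_rpow hr.le hp]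
  refine ⟨r ^ p⁻¹ / ν, antiperiodicPrimitive g π, by positivity,
    contDiff_antiperiodicPrimitive hg_anti hg, primitive_anti.periodic_two_mul, ?_, ?_, 0, ?_⟩
  · rw [integral_Icc_eq_integral_Ioc, ← intervalIntegral.integral_of_le (by linarith [pi_pos]),
      intervalIntegral_eq_zero_of_antiperiodic primitive_anti]
  · simp only [deriv_primitive]
    exact (ciSup_le hg_le).trans_lt ha
  · simp only [dilation_eq, deriv_primitive, zero_sub]
    exact lt_integral.trans_le (le_abs_self _)

section KernelIntegrability

lemma norm_fourier_le_integral_norm {V E : Type*} [NormedAddCommGroup V] [InnerProductSpace ℝ V]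
    [MeasurableSpace V] [BorelSpace V] [FiniteDimensional ℝ V]
    [NormedAddCommGroup E] [NormedSpace ℂ E] (f : V → E) (w : V) :
    ‖𝓕 f w‖ ≤ ∫ v, ‖f v‖ :=
  VectorFourier.norm_fourierIntegral_le_integral_norm _ _ _ _ _

lemma continuous_fourier_of_integrable {V E : Type*} [NormedAddCommGroup V]
    [InnerProductSpace ℝ V] [MeasurableSpace V] [BorelSpace V] [FiniteDimensional ℝ V]
    [NormedAddCommGroup E] [NormedSpace ℂ E] {f : V → E} (hf : Integrable f) :
    Continuous (𝓕 f) :=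
  VectorFourier.fourierIntegral_continuous continuous_fourierChar continuous_inner hf

-- `𝓕 f''` is `-(2πw)² 𝓕 f`, so `(1 + w²) ‖𝓕 f w‖` is bounded by `‖f‖₁ + ‖f''‖₁`.
lemma integrable_fourier_of_hasDerivAt {E : Type*} [NormedAddCommGroup E] [NormedSpace ℂ E]
    {f f' f'' : ℝ → E} (hf : Integrable f) (hf' : Integrable f') (hf'' : Integrable f'')
    (hderiv : ∀ x, HasDerivAt f (f' x) x) (hderiv' : ∀ x, HasDerivAt f' (f'' x) x) :
    Integrable (𝓕 f) := by
  have fourier_deriv_of_hasDerivAt {u u' : ℝ → E} (hu : Integrable u) (hu' : Integrable u')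
      (h : ∀ x, HasDerivAt u (u' x) x) (w : ℝ) : 𝓕 u' w = (2 * π * Complex.I * w) • 𝓕 u w := by
    have deriv_eq : deriv u = u' := funext fun x => (h x).deriv
    rw [← deriv_eq, Real.fourier_deriv hu (fun x => (h x).differentiableAt) (deriv_eq ▸ hu')]
  have norm_fourier_second (w : ℝ) : ‖𝓕 f'' w‖ = (2 * π * |w|) ^ 2 * ‖𝓕 f w‖ := by
    rw [fourier_deriv_of_hasDerivAt hf' hf'' hderiv', fourier_deriv_of_hasDerivAt hf hf' hderiv]
    simp only [norm_smul, norm_mul, Complex.norm_ofNat, Complex.norm_real, Real.norm_eq_abs,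
      abs_of_pos pi_pos, Complex.norm_I, mul_one]
    ring
  have decay (w : ℝ) : ‖𝓕 f w‖ ≤ ((∫ v, ‖f v‖) + ∫ v, ‖f'' v‖) * (1 + w ^ 2)⁻¹ := by
    rw [← div_eq_mul_inv, le_div_iff₀ (by positivity), mul_comm]
    calc (1 + w ^ 2) * ‖𝓕 f w‖ = ‖𝓕 f w‖ + (1 * |w|) ^ 2 * ‖𝓕 f w‖ := by
          rw [one_mul, sq_abs]; ring
      _ ≤ ‖𝓕 f w‖ + (2 * π * |w|) ^ 2 * ‖𝓕 f w‖ := by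
          gcongr
          linarith [pi_gt_three]
      _ = ‖𝓕 f w‖ + ‖𝓕 f'' w‖ := by rw [norm_fourier_second]
      _ ≤ (∫ v, ‖f v‖) + ∫ v, ‖f'' v‖ :=
          add_le_add (norm_fourier_le_integral_norm f w) (norm_fourier_le_integral_norm f'' w)
  exact (integrable_inv_one_add_sq.const_mul _).mono'
    (continuous_fourier_of_integrable hf).aestronglyMeasurable (.of_forall decay)

lemma integrable_pow_mul_exp_neg_pow_four (n : ℕ) :
    Integrable fun ξ : ℝ => ξ ^ n * rexp (-ξ ^ 4) := by
  have gaussian_moment : Integrable fun ξ : ℝ => ξ ^ n * rexp (-1 * ξ ^ 2) := by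
    simpa only [rpow_natCast] using
      integrable_rpow_mul_exp_neg_mul_sq one_pos (neg_one_lt_zero.trans_le n.cast_nonneg)
  refine (gaussian_moment.norm.const_mul (rexp 1)).mono' (by fun_prop) (.of_forall fun ξ => ?_)
  have exp_le : rexp (-ξ ^ 4) ≤ rexp 1 * rexp (-1 * ξ ^ 2) := by
    rw [← exp_add]
    gcongr
    nlinarith [sq_nonneg (ξ ^ 2 - 1 / 2)]
  rw [norm_mul, norm_mul, norm_of_nonneg (exp_pos _).le, norm_of_nonneg (exp_pos _).le,
    mul_left_comm]
  gcongr

lemma hasDerivAt_exp_neg_pow_four (ξ : ℝ) :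
    HasDerivAt (fun ξ => rexp (-ξ ^ 4)) (-4 * (ξ ^ 3 * rexp (-ξ ^ 4))) ξ := by
  refine (hasDerivAt_pow 4 ξ).neg.exp.congr_deriv ?_
  simp only [Pi.neg_apply]
  push_cast
  ring

lemma integrable_fourier_exp_neg_pow_four :
    Integrable (𝓕 fun ξ : ℝ => (rexp (-ξ ^ 4) : ℂ)) := by
  have moment := integrable_pow_mul_exp_neg_pow_four
  have integrable_exp : Integrable fun ξ : ℝ => rexp (-ξ ^ 4) := by
    simpa only [pow_zero, one_mul] using moment 0
  have hasDerivAt_deriv (ξ : ℝ) : HasDerivAt (fun ξ => -4 * (ξ ^ 3 * rexp (-ξ ^ 4)))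
      (16 * (ξ ^ 6 * rexp (-ξ ^ 4)) - 12 * (ξ ^ 2 * rexp (-ξ ^ 4))) ξ := by
    refine (((hasDerivAt_pow 3 ξ).mul (hasDerivAt_exp_neg_pow_four ξ)).const_mul
      (-4)).congr_deriv ?_
    push_cast
    ring
  exact integrable_fourier_of_hasDerivAt integrable_exp.ofReal ((moment 3).const_mul _).ofReal
    (((moment 6).const_mul _).sub ((moment 2).const_mul _)).ofReal
    (fun ξ => (hasDerivAt_exp_neg_pow_four ξ).ofReal_comp)
    (fun ξ => (hasDerivAt_deriv ξ).ofReal_comp)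

lemma fker_eq_re_fourier (x : ℝ) :
    fker x = (2 * π)⁻¹ * (𝓕 (fun ξ : ℝ => (rexp (-ξ ^ 4) : ℂ)) (x * -(2 * π)⁻¹)).re := by
  rw [fker, Complex.smul_re, smul_eq_mul, Real.fourier_real_eq_integral_exp_smul]
  congr 3 with ξ
  have phase : -2 * π * ξ * (x * -(2 * π)⁻¹) = ξ * x := by field_simp
  rw [phase, smul_eq_mul, Complex.ofReal_exp, ← Complex.exp_add]
  congr 1
  push_cast
  ring

lemma integrable_fker : Integrable fker := by
  rw [funext fker_eq_re_fourier]
  exact ((integrable_fourier_exp_neg_pow_four.comp_mul_right'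
    (neg_ne_zero.2 (by positivity))).re).const_mul _

end KernelIntegrability

/-- Step 1 in the proof of Theorem 1.7, `d = 1`: for every `ν > 0`
and `ε > 0` there exist `t > 0` and a smooth `2π`-periodic mean-zero `h₀` with
`‖h₀'‖_∞ < 1` such that `‖e^{−νt∂_x⁴}∂_x h₀‖_∞ > C₁ − ε`, where the semigroup acts by
convolution with the rescaled kernel `(νt)^{−1/4} f(·(νt)^{−1/4})`. -/
theorem stmt19 (ν ε : ℝ) (hν : 0 < ν) (hε : 0 < ε) :
    ∃ (t : ℝ) (h₀ : ℝ → ℝ), 0 < t ∧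
      ContDiff ℝ (⊤ : ℕ∞) h₀ ∧
      Function.Periodic h₀ (2 * Real.pi) ∧
      (∫ x in Icc (-Real.pi) Real.pi, h₀ x) = 0 ∧
      (⨆ x : ℝ, |deriv h₀ x|) < 1 ∧
      ∃ x : ℝ, Cone - ε <
        |∫ y : ℝ, (ν * t) ^ (-(1 : ℝ) / 4) *
          fker ((x - y) * (ν * t) ^ (-(1 : ℝ) / 4)) * deriv h₀ y| :=
  stmt19_general integrable_fker (by norm_num) hν hε
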